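/- (Affine cipher, equivocation bounds.) Let F be a finite field with |F| = N ≥ 3 and probability distribution P_M, and let the key space K ≤ Sym(F) be the group of affine permutations x ↦ a·x + b with a ≠ 0, keys uniform. Set R₄ = max{P_M(n) : n ∈ F}. Then for every message length L: log(2) · R₄^L ≤ H(K | M^L C^L) ≤ log(N(N−1)) · N(N−2) · R₄^L. -/

import Mathlib

open scoped Classical

noncomputable section

/-- Probability of a word under the i.i.d. extension of the symbol distribution `P`. -/
def wordP {M : Type*} (P : M → ℝ) {L : ℕ} (m : Fin L → M) : ℝ := ∏ l, P (m l)

/-- Number of keys in `K` mapping the message `m` (letterwise) to the cryptogram `c`. -/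
def keyCount {M : Type*} (K : Subgroup (Equiv.Perm M)) {L : ℕ} (m c : Fin L → M) : ℕ :=
  Nat.card {k : Equiv.Perm M // k ∈ K ∧ ∀ l, k (m l) = c l}

/-- The key appearance equivocation `H(K | M^L C^L)` for the substitution cipher with
key space `K` (keys uniform), symbol distribution `P` and message length `L`. -/
def kae {M : Type*} [Fintype M] (K : Subgroup (Equiv.Perm M)) (P : M → ℝ) (L : ℕ) : ℝ :=
  ∑ m : Fin L → M, ∑ c : Fin L → M,
    wordP P m * (keyCount K m c : ℝ) / (Nat.card K : ℝ) * Real.log (keyCount K m c)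

/-- The fixed set `F(π)` of a permutation. -/
def fixedSet {M : Type*} [Fintype M] [DecidableEq M] (π : Equiv.Perm M) : Finset M :=
  Finset.univ.filter fun j => π j = j

/-- `P_π`: total probability of the fixed set of `π`. -/
def Pfix {M : Type*} [Fintype M] [DecidableEq M] (P : M → ℝ) (π : Equiv.Perm M) : ℝ :=
  ∑ j ∈ fixedSet π, P j

/-- A key is maximal if it is a non-identity element of `K` whose fixed set is maximal
under inclusion among fixed sets of non-identity elements of `K`. -/
def IsMaximalKey {M : Type*} [Fintype M] [DecidableEq M] (K : Subgroup (Equiv.Perm M))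
    (π : Equiv.Perm M) : Prop :=
  π ∈ K ∧ π ≠ 1 ∧ ∀ τ ∈ K, τ ≠ 1 → fixedSet π ⊆ fixedSet τ → fixedSet τ = fixedSet π

/-- The stabilizer of the message `m` in `K` is nontrivial. -/
def hasNontrivialStab {M : Type*} (K : Subgroup (Equiv.Perm M)) {L : ℕ} (m : Fin L → M) : Prop :=
  ∃ k ∈ K, k ≠ 1 ∧ ∀ l, k (m l) = m l

/-- Total probability of length-`L` messages with a nontrivial stabilizer in `K`. -/
def probNontrivial {M : Type*} [Fintype M] (K : Subgroup (Equiv.Perm M)) (P : M → ℝ)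
    (L : ℕ) : ℝ :=
  ∑ m : Fin L → M, if hasNontrivialStab K m then wordP P m else 0

theorem keyCount_eq_diag {M : Type*} (K : Subgroup (Equiv.Perm M)) {L : ℕ} (m c : Fin L → M)
    (h : keyCount K m c ≠ 0) : keyCount K m c = keyCount K m m := by
  have hne : Nonempty {k : Equiv.Perm M // k ∈ K ∧ ∀ l, k (m l) = c l} := by
    by_contra hc
    rw [not_nonempty_iff] at hc
    exact h (by unfold keyCount; exact Nat.card_of_isEmpty)
  obtain ⟨g, hg, hgm⟩ := hne
  unfold keyCount
  refine Nat.card_congr ⟨fun k => ⟨g⁻¹ * k.1, K.mul_mem (K.inv_mem hg) k.2.1, fun l => ?_⟩,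
    fun k => ⟨g * k.1, K.mul_mem hg k.2.1, fun l => ?_⟩, fun k => ?_, fun k => ?_⟩
  · rw [Equiv.Perm.mul_apply, k.2.2 l, ← hgm l]; simp
  · rw [Equiv.Perm.mul_apply, k.2.2 l, hgm l]
  · simp
  · simp

theorem sum_keyCount {M : Type*} [Fintype M] (K : Subgroup (Equiv.Perm M)) {L : ℕ}
    (m : Fin L → M) : ∑ c : Fin L → M, keyCount K m c = Nat.card K := by
  unfold keyCount
  rw [← Nat.card_sigma]
  refine Nat.card_congr ⟨fun k => ⟨k.2.1, k.2.2.1⟩,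
    fun k => ⟨fun l => k.1 (m l), k.1, k.2, fun l => rfl⟩, ?_, fun k => rfl⟩
  rintro ⟨c, k, hk, h⟩
  obtain rfl : (fun l => k (m l)) = c := funext h
  rfl

theorem kae_eq {M : Type*} [Fintype M] (K : Subgroup (Equiv.Perm M)) (P : M → ℝ) (L : ℕ) :
    kae K P L = ∑ m : Fin L → M, wordP P m * Real.log (keyCount K m m) := by
  unfold kae
  refine Finset.sum_congr rfl fun m _ => ?_
  have h1 : ∀ c : Fin L → M,
      wordP P m * (keyCount K m c : ℝ) / (Nat.card K : ℝ) * Real.log (keyCount K m c)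
      = (keyCount K m c : ℝ) * (wordP P m / (Nat.card K : ℝ) * Real.log (keyCount K m m)) := by
    intro c
    by_cases h : keyCount K m c = 0
    · simp [h]
    · rw [keyCount_eq_diag K m c h]; ring
  rw [Finset.sum_congr rfl fun c _ => h1 c, ← Finset.sum_mul, ← Nat.cast_sum, sum_keyCount]
  have : (Nat.card K : ℝ) ≠ 0 := by
    exact_mod_cast Nat.card_pos.ne'
  field_simp

theorem keyCount_le {F : Type*} [Field F] [Fintype F]
    (K : Subgroup (Equiv.Perm F))
    (hK : ∀ σ : Equiv.Perm F, σ ∈ K ↔ ∃ a b : F, a ≠ 0 ∧ ∀ x, σ x = a * x + b)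
    {L : ℕ} (m c : Fin L → F) :
    keyCount K m c ≤ Fintype.card F * (Fintype.card F - 1) := by
  have h : keyCount K m c ≤ Nat.card ((Finset.univ : Finset F).offDiag) := by
    unfold keyCount
    refine Nat.card_le_card_of_injective
      (fun k => ⟨(k.1 0, k.1 1), by simp⟩) ?_
    rintro ⟨k, hk, hkm⟩ ⟨k', hk', hkm'⟩ h
    obtain ⟨a, b, ha, hab⟩ := (hK k).1 hk
    obtain ⟨a', b', ha', hab'⟩ := (hK k').1 hk'
    simp only [Subtype.mk.injEq, Prod.mk.injEq, hab, hab'] at h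
    obtain ⟨h0, h1⟩ := h
    have hb : b = b' := by simpa using h0
    have ha : a = a' := by simpa [hb] using h1
    ext x
    simp [hab, hab', ha, hb]
  rw [Nat.card_eq_fintype_card, Fintype.card_coe, Finset.offDiag_card, Finset.card_univ] at h
  rwa [Nat.mul_sub, mul_one]

theorem keyCount_const {F : Type*} [Field F] [Fintype F] (hN : 3 ≤ Fintype.card F)
    (K : Subgroup (Equiv.Perm F))
    (hK : ∀ σ : Equiv.Perm F, σ ∈ K ↔ ∃ a b : F, a ≠ 0 ∧ ∀ x, σ x = a * x + b)
    {L : ℕ} (n : F) : 2 ≤ keyCount K (fun _ : Fin L => n) (fun _ => n) := by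
  obtain ⟨a, ha⟩ : ∃ a : F, a ∉ ({0, 1} : Finset F) := by
    by_contra! hc
    have h1 : (Finset.univ : Finset F).card ≤ ({0, 1} : Finset F).card :=
      Finset.card_le_card fun x _ => hc x
    have := Finset.card_le_two (a := (0 : F)) (b := 1)
    rw [Finset.card_univ] at h1
    omega
  simp only [Finset.mem_insert, Finset.mem_singleton, not_or] at ha
  obtain ⟨ha0, ha1⟩ := ha
  let g : Equiv.Perm F := ⟨fun x => a * x + (n - a * n), fun y => a⁻¹ * (y - (n - a * n)),
    fun x => by field_simp; ring, fun x => by field_simp; ring⟩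
  have hg : ∀ x, g x = a * x + (n - a * n) := fun x => rfl
  unfold keyCount
  have : Nontrivial {k : Equiv.Perm F // k ∈ K ∧ ∀ _ : Fin L, k n = n} := by
    refine ⟨⟨1, K.one_mem, fun _ => rfl⟩,
      ⟨g, (hK g).2 ⟨a, _, ha0, hg⟩, fun _ => by rw [hg]; ring⟩, fun h => ?_⟩
    have h' : (1 : Equiv.Perm F) = g := congrArg Subtype.val h
    have h2 := congrArg (fun f : Equiv.Perm F => f (n + 1)) h'
    simp only [hg, Equiv.Perm.one_apply] at h2
    apply ha1
    linear_combination -h2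
  exact Finite.one_lt_card

theorem keyCount_nonconst {F : Type*} [Field F] [Fintype F]
    (K : Subgroup (Equiv.Perm F))
    (hK : ∀ σ : Equiv.Perm F, σ ∈ K ↔ ∃ a b : F, a ≠ 0 ∧ ∀ x, σ x = a * x + b)
    {L : ℕ} (m : Fin L → F) (hm : ¬ ∃ n, m = fun _ => n) : keyCount K m m ≤ 1 := by
  unfold keyCount
  obtain ⟨l, l', hl⟩ : ∃ l l', m l ≠ m l' := by
    by_contra! hc
    rcases isEmpty_or_nonempty (Fin L) with h | ⟨⟨l⟩⟩
    · exact hm ⟨0, funext fun l => h.elim l⟩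
    · exact hm ⟨m l, funext fun l' => hc _ _⟩
  rw [Finite.card_le_one_iff_subsingleton]
  have key : ∀ k : Equiv.Perm F, k ∈ K → (∀ l, k (m l) = m l) → k = 1 := by
    intro k hk h
    obtain ⟨a, b, ha, hab⟩ := (hK k).1 hk
    have h1 := h l
    have h2 := h l'
    rw [hab] at h1 h2
    have h3 : (a - 1) * (m l - m l') = 0 := by linear_combination h1 - h2
    have h4 : a = 1 := by
      rcases mul_eq_zero.1 h3 with h | h
      · exact sub_eq_zero.1 h
      · exact absurd (sub_eq_zero.1 h) hl
    subst h4
    have hb : b = 0 := by linear_combination h1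
    ext x
    simp [hab, hb]
  exact ⟨fun k k' => Subtype.ext ((key _ k.2.1 k.2.2).trans (key _ k'.2.1 k'.2.2).symm)⟩

/-- Affine cipher, equivocation bounds:
`log 2 · R₄^L ≤ H(K | M^L C^L) ≤ log(N(N-1)) · N(N-2) · R₄^L` with
`R₄ = max{P_M(n) : n ∈ F}`. -/
theorem kae_bounds_affine_cipher {F : Type*} [Field F] [Fintype F] [DecidableEq F]
    (hN : 3 ≤ Fintype.card F) (K : Subgroup (Equiv.Perm F))
    (hK : ∀ σ : Equiv.Perm F, σ ∈ K ↔ ∃ a b : F, a ≠ 0 ∧ ∀ x, σ x = a * x + b)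
    (P : F → ℝ) (hP : ∀ x, 0 ≤ P x) (hsum : ∑ x, P x = 1)
    (R : ℝ) (hR : IsGreatest {x : ℝ | ∃ n : F, P n = x} R) (L : ℕ) :
    Real.log 2 * R ^ L ≤ kae K P L ∧
      kae K P L ≤ Real.log (Fintype.card F * (Fintype.card F - 1) : ℕ) *
        (Fintype.card F * (Fintype.card F - 2) : ℕ) * R ^ L := by
  obtain ⟨⟨n0, hn0⟩, hmax⟩ := hR
  have hle : ∀ n, P n ≤ R := fun n => hmax ⟨n, rfl⟩
  have hR0 : 0 ≤ R := hn0 ▸ hP n0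
  have hw : ∀ m : Fin L → F, 0 ≤ wordP P m := fun m => Finset.prod_nonneg fun l _ => hP _
  have hlog : ∀ m : Fin L → F, 0 ≤ Real.log (keyCount K m m) := fun m => Real.log_natCast_nonneg _
  have hwc : ∀ n : F, wordP P (fun _ : Fin L => n) = P n ^ L := fun n => by simp [wordP]
  rw [kae_eq]
  constructor
  · calc Real.log 2 * R ^ L
        ≤ wordP P (fun _ : Fin L => n0) *
          Real.log (keyCount K (fun _ : Fin L => n0) (fun _ => n0)) := by
          rw [hwc, hn0, mul_comm]
          refine mul_le_mul_of_nonneg_left ?_ (pow_nonneg hR0 _)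
          refine Real.log_le_log (by norm_num) ?_
          exact_mod_cast keyCount_const hN K hK n0
      _ ≤ _ := Finset.single_le_sum
          (f := fun m : Fin L → F => wordP P m * Real.log (keyCount K m m))
          (fun m _ => mul_nonneg (hw m) (hlog m)) (Finset.mem_univ _)
  · set N := Fintype.card F with hNdef
    set B := Real.log (N * (N - 1) : ℕ) with hB
    have hB0 : 0 ≤ B := Real.log_natCast_nonneg _
    let S : Finset (Fin L → F) := Finset.univ.image fun (n : F) (_ : Fin L) => n
    have hS : S.card ≤ N := Finset.card_image_le
    have hz : ∀ m : Fin L → F, m ∉ S → wordP P m * Real.log (keyCount K m m) = 0 := by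
      intro m hm
      have h1 : keyCount K m m ≤ 1 := by
        refine keyCount_nonconst K hK m ?_
        rintro ⟨n, rfl⟩
        exact hm (Finset.mem_image.2 ⟨n, Finset.mem_univ _, rfl⟩)
      interval_cases h : keyCount K m m <;> simp
    rw [← Finset.sum_subset (Finset.subset_univ S) fun m _ hm => hz m hm]
    calc ∑ m ∈ S, wordP P m * Real.log (keyCount K m m)
        ≤ ∑ m ∈ S, R ^ L * B := by
          refine Finset.sum_le_sum fun m hm => ?_
          obtain ⟨n, -, rfl⟩ := Finset.mem_image.1 hm
          have h2 : 2 ≤ keyCount K (fun _ : Fin L => n) (fun _ => n) := keyCount_const hN K hK n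
          refine mul_le_mul ?_ ?_ (hlog _) (pow_nonneg hR0 _)
          · rw [hwc]; exact pow_le_pow_left₀ (hP n) (hle n) L
          · refine Real.log_le_log (by exact_mod_cast (by omega)) ?_
            exact_mod_cast keyCount_le K hK _ _
      _ = (S.card : ℝ) * (R ^ L * B) := by rw [Finset.sum_const, nsmul_eq_mul]
      _ ≤ ((N * (N - 2) : ℕ) : ℝ) * (R ^ L * B) := by
          refine mul_le_mul_of_nonneg_right ?_ (mul_nonneg (pow_nonneg hR0 _) hB0)
          exact_mod_cast hS.trans (Nat.le_mul_of_pos_right _ (by omega))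
      _ = _ := by ring
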